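/- Dual configurations on S⁴: if (a₁, a₂, b, c) is an integrable (a₁a₂ − a₂a₁ + bc = 0) and nondegenerate S⁴-configuration, then the dual tuple (a₁ᵀ, a₂ᵀ, −cᵀ, bᵀ) (with a₁ᵀ, a₂ᵀ ∈ M_{k×k}(ℂ), −cᵀ ∈ M_{k×n}(ℂ), bᵀ ∈ M_{n×k}(ℂ)) is again an integrable and nondegenerate S⁴-configuration; it corresponds to the dual bundle ℰ*. -/

import Mathlib

open Matrix

/-- The monad map `A(x)` of an `S⁴`-configuration `(a₁, a₂, b, c)`. -/
noncomputable def monadA {k n : ℕ} (a₁ a₂ : Matrix (Fin k) (Fin k) ℂ)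
    (c : Matrix (Fin n) (Fin k) ℂ) (x : ℂ × ℂ × ℂ) :
    Matrix ((Fin k ⊕ Fin k) ⊕ Fin n) (Fin k) ℂ :=
  Matrix.fromRows
    (Matrix.fromRows (x.1 • (1 : Matrix (Fin k) (Fin k) ℂ) - x.2.2 • a₁)
      (x.2.1 • (1 : Matrix (Fin k) (Fin k) ℂ) - x.2.2 • a₂))
    (x.2.2 • c)

/-- The monad map `B(x)` of an `S⁴`-configuration `(a₁, a₂, b, c)`. -/
noncomputable def monadB {k n : ℕ} (a₁ a₂ : Matrix (Fin k) (Fin k) ℂ)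
    (b : Matrix (Fin k) (Fin n) ℂ) (x : ℂ × ℂ × ℂ) :
    Matrix (Fin k) ((Fin k ⊕ Fin k) ⊕ Fin n) ℂ :=
  Matrix.fromCols
    (Matrix.fromCols (-(x.2.1 • (1 : Matrix (Fin k) (Fin k) ℂ)) + x.2.2 • a₂)
      (x.1 • (1 : Matrix (Fin k) (Fin k) ℂ) - x.2.2 • a₁))
    (x.2.2 • b)

/-!
The two monad maps are exchanged by duality: `B(x)ᵀ` is the map `A(x)` of the transposed data,
followed by the symplectic matrix `J` on the summand `ℂᵏ ⊕ ℂᵏ`. Since a matrix over a field is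
surjective iff its transpose is injective, the two halves of nondegeneracy are interchanged when
passing to the dual configuration. The minus sign in `-cᵀ` is forced by integrability, because
transposition reverses the commutator; it does not affect nondegeneracy.
-/

section Transpose

variable {m n R : Type*} [Fintype m] [Fintype n]

theorem mulVec_surjective_iff_transpose_mulVec_injective [Field R] {M : Matrix m n R} :
    Function.Surjective M.mulVec ↔ Function.Injective Mᵀ.mulVec :=
  calc Function.Surjective M.mulVec
    _ ↔ M.mulVecLin.range = ⊤ := (LinearMap.range_eq_top (f := M.mulVecLin)).symm
    _ ↔ M.rank = Fintype.card m := by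
      rw [← Module.finrank_fintype_fun_eq_card R, Matrix.rank]
      exact ⟨fun h => by rw [h, finrank_top], Submodule.eq_top_of_finrank_eq⟩
    _ ↔ LinearIndependent R M.row := by
      rw [linearIndependent_iff_card_eq_finrank_span, Set.finrank, ← rank_eq_finrank_span_row,
        eq_comm]
    _ ↔ Function.Injective Mᵀ.mulVec := by rw [mulVec_injective_iff, col_transpose]

theorem mul_mulVec_injective_iff_of_isUnit [DecidableEq m] [Semiring R] {U : Matrix m m R}
    (hU : IsUnit U) {M : Matrix m n R} :
    Function.Injective (U * M).mulVec ↔ Function.Injective M.mulVec := by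
  have hcomp : (U * M).mulVec = U.mulVec ∘ M.mulVec := by
    ext1 v
    exact (mulVec_mulVec v U M).symm
  rw [hcomp, (mulVec_injective_of_isUnit hU).of_comp_iff]

theorem transpose_commutator_add_mul [NonUnitalCommRing R] (a₁ a₂ : Matrix m m R)
    (b : Matrix m n R) (c : Matrix n m R) :
    a₁ᵀ * a₂ᵀ - a₂ᵀ * a₁ᵀ + (-cᵀ) * bᵀ = -(a₁ * a₂ - a₂ * a₁ + b * c)ᵀ := by
  simp only [transpose_add, transpose_sub, transpose_mul, Matrix.neg_mul]
  abel

end Transpose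

section SymplecticExtension

variable (l m R : Type*) [DecidableEq l] [DecidableEq m] [CommRing R]

/-- The block sum `J ⊕ 1` of the canonical symplectic matrix on `Rˡ ⊕ Rˡ` with the identity of `Rᵐ`.
For `Rˡ = ℂᵏ` and `Rᵐ = ℂⁿ` it identifies the middle term `ℂᵏ ⊕ ℂᵏ ⊕ ℂⁿ` of the monad with its
dual. -/
def symplecticExtension : Matrix ((l ⊕ l) ⊕ m) ((l ⊕ l) ⊕ m) R :=
  fromBlocks (J l R) 0 0 1

theorem isUnit_symplecticExtension [Fintype l] [Fintype m] :
    IsUnit (symplecticExtension l m R) :=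
  isUnit_fromBlocks_zero₂₁.2 ⟨(isUnit_iff_isUnit_det _).2 (isUnit_det_J l R), isUnit_one⟩

end SymplecticExtension

section Monad

variable {k n : ℕ} (a₁ a₂ : Matrix (Fin k) (Fin k) ℂ) (x : ℂ × ℂ × ℂ)

theorem transpose_monadB (b : Matrix (Fin k) (Fin n) ℂ) :
    (monadB a₁ a₂ b x)ᵀ =
      symplecticExtension (Fin k) (Fin n) ℂ * monadA a₁ᵀ a₂ᵀ bᵀ x := by
  simp [monadA, monadB, symplecticExtension, J, transpose_fromCols, fromBlocks_mul_fromRows,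
    neg_add_eq_sub]

theorem monadB_mulVec_surjective_iff (b : Matrix (Fin k) (Fin n) ℂ) :
    Function.Surjective (monadB a₁ a₂ b x).mulVec ↔
      Function.Injective (monadA a₁ᵀ a₂ᵀ bᵀ x).mulVec := by
  rw [mulVec_surjective_iff_transpose_mulVec_injective, transpose_monadB,
    mul_mulVec_injective_iff_of_isUnit (isUnit_symplecticExtension _ _ _)]

theorem monadA_neg_mulVec_injective_iff (c : Matrix (Fin n) (Fin k) ℂ) :
    Function.Injective (monadA a₁ a₂ (-c) x).mulVec ↔
      Function.Injective (monadA a₁ a₂ c x).mulVec := by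
  let S : Matrix ((Fin k ⊕ Fin k) ⊕ Fin n) ((Fin k ⊕ Fin k) ⊕ Fin n) ℂ := fromBlocks 1 0 0 (-1)
  have hS : IsUnit S := isUnit_fromBlocks_zero₂₁.2 ⟨isUnit_one, isUnit_one.neg⟩
  have hneg : monadA a₁ a₂ (-c) x = S * monadA a₁ a₂ c x := by
    simp [S, monadA, fromBlocks_mul_fromRows]
  rw [hneg, mul_mulVec_injective_iff_of_isUnit hS]

end Monad

/-- Dual configurations on `S⁴`: if `(a₁, a₂, b, c)` is an integrable nondegenerate
`S⁴`-configuration, then so is the dual tuple `(a₁ᵀ, a₂ᵀ, −cᵀ, bᵀ)`. -/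
theorem s4_dual_configuration {k n : ℕ}
    (a₁ a₂ : Matrix (Fin k) (Fin k) ℂ)
    (b : Matrix (Fin k) (Fin n) ℂ) (c : Matrix (Fin n) (Fin k) ℂ)
    (hint : a₁ * a₂ - a₂ * a₁ + b * c = 0)
    (hnd : ∀ x : ℂ × ℂ × ℂ, x ≠ 0 →
      Function.Injective (monadA a₁ a₂ c x).mulVec ∧
      Function.Surjective (monadB a₁ a₂ b x).mulVec) :
    (a₁ᵀ * a₂ᵀ - a₂ᵀ * a₁ᵀ + (-cᵀ) * bᵀ = 0) ∧
    (∀ x : ℂ × ℂ × ℂ, x ≠ 0 →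
      Function.Injective (monadA a₁ᵀ a₂ᵀ bᵀ x).mulVec ∧
      Function.Surjective (monadB a₁ᵀ a₂ᵀ (-cᵀ) x).mulVec) := by
  refine ⟨?_, fun x hx => ?_⟩
  · rw [transpose_commutator_add_mul, hint, transpose_zero, neg_zero]
  · obtain ⟨hA, hB⟩ := hnd x hx
    refine ⟨(monadB_mulVec_surjective_iff a₁ a₂ x b).1 hB, ?_⟩
    rw [monadB_mulVec_surjective_iff, transpose_neg, monadA_neg_mulVec_injective_iff]
    simpa only [transpose_transpose] using hA
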